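/- arXiv:1708.07250 — 3 statements merged into one kernel-verified Lean document; each statement's English description precedes it below -/
import Mathlib

section
/- Let R : 2^{<ω} → 𝕊 be a function into Sacks conditions such that (1) for all s₁, s₂ ∈ 2^{<ω}, if s₁ is an initial segment of s₂ then R(s₂) ⊆ R(s₁), and (2) for every s ∈ 2^{<ω}, Stem(R(s⌢0)) and Stem(R(s⌢1)) are incomparable nodes. For each n ∈ ω let p_n := ⋃{R(s) : s ∈ 2^n}. Then each p_n is a Sacks condition, p_0 = R(∅), p_0 ⊇ p_1, and for every n ≥ 1 one has p_n ≥_{n-1} p_{n+1}; in particular R(∅) = p_0 ≥ p_1 ≥_0 p_2 ≥_1 p_3 ≥_2 ⋯ is a fusion sequence. -/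
/-- A perfect tree (Sacks condition): a nonempty subset of `2^{<ω}` closed under
initial segments such that every node has two incomparable extensions in the tree. -/
def PerfectTree (p : Set (List Bool)) : Prop :=
  p.Nonempty ∧ (∀ s ∈ p, ∀ t : List Bool, t <+: s → t ∈ p) ∧
    ∀ t ∈ p, ∃ t₁ ∈ p, ∃ t₂ ∈ p, t <+: t₁ ∧ t <+: t₂ ∧ ¬ t₁ <+: t₂ ∧ ¬ t₂ <+: t₁

/-- A branching node of `p`: a node of `p` having at least two immediate successors in `p`. -/
def BranchNode (p : Set (List Bool)) (t : List Bool) : Prop :=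
  t ∈ p ∧ t ++ [false] ∈ p ∧ t ++ [true] ∈ p

/-- `t` is a `k`-th branching node of `p`: it is a branching node and exactly `k`
branching nodes of `p` are proper initial segments of `t`.  In particular the stem
of `p` is the unique `0`-th branching node of `p`. -/
def NthBranchNode (p : Set (List Bool)) (k : ℕ) (t : List Bool) : Prop :=
  BranchNode p t ∧ {s | BranchNode p s ∧ s <+: t ∧ s ≠ t}.ncard = k

/-- `q ≤ₙ p` for Sacks conditions: `q ≤ p` and every `k`-th branching node of `p`
with `k ≤ n` belongs to `q` and is a branching node of `q`. -/
def LeqN (n : ℕ) (q p : Set (List Bool)) : Prop :=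
  q ⊆ p ∧ ∀ k ≤ n, ∀ t : List Bool, NthBranchNode p k t → t ∈ q ∧ BranchNode q t

/-!
Write `t_s` for the stem of `R(s)`. Passing from `s` to `s⌢i` adds a branching node of `p_n` below
the stem, namely the meet of the incomparable stems of `R(s⌢0)` and `R(s⌢1)`; hence at least `n`
branching nodes of `p_n` lie strictly below `t_s` whenever `s ∈ 2^n`. So a `k`-th branching node `t`
of `p_n` with `k < n` cannot extend any such `t_s`, and an immediate successor of `t` lying in
`R(s)` must be an initial segment of `t_s`. The stem survives in `p_{n+1}`, since it is an initial
segment of the stem of `R(s⌢0)`, and therefore so does the successor.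
-/

section Prefix

variable {α : Type*} {x y : List α}

theorem exists_concat_prefix_of_incomparable (hxy : ¬ x <+: y) (hyx : ¬ y <+: x) :
    ∃ c a b, a ≠ b ∧ c ++ [a] <+: x ∧ c ++ [b] <+: y := by
  induction x generalizing y with
  | nil => simp at hxy
  | cons a x ih =>
    cases y with
    | nil => simp at hyx
    | cons b y =>
      by_cases hab : a = b
      · subst hab
        rw [List.prefix_cons_inj] at hxy hyx
        obtain ⟨c, a', b', hne, hx, hy⟩ := ih hxy hyx
        exact ⟨a :: c, a', b', hne, by simpa using hx, by simpa using hy⟩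
      · exact ⟨[], a, b, hab, by simp, by simp⟩

theorem prefix_of_concat_prefix_of_ne {c r : List α} {a b : α} (hab : a ≠ b) (hx : c ++ [a] <+: x)
    (hy : c ++ [b] <+: y) (hrx : r <+: x) (hry : r <+: y) : r <+: c := by
  rcases List.prefix_or_prefix_of_prefix hrx hx with hr | hr
  · rcases List.prefix_concat_iff.1 hr with rfl | hrc
    · exact absurd (by simpa using List.prefix_of_prefix_length_le hry hy (by simp)) hab
    · exact hrc
  · exact absurd (by simpa using List.prefix_of_prefix_length_le (hr.trans hry) hy (by simp)) hab

end Prefix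

section BranchNode

variable {p q : Set (List Bool)} {t u x y : List Bool}

theorem BranchNode.mono (hqp : q ⊆ p) (ht : BranchNode q t) : BranchNode p t :=
  ⟨hqp ht.1, hqp ht.2.1, hqp ht.2.2⟩

/-- The branching nodes of `p` that are proper initial segments of `t`; their number is the `k` for
which a branching node `t` is a `k`-th branching node. -/
def branchNodesBelow (p : Set (List Bool)) (t : List Bool) : Set (List Bool) :=
  {s | BranchNode p s ∧ s <+: t ∧ s ≠ t}

theorem finite_branchNodesBelow (p : Set (List Bool)) (t : List Bool) :
    (branchNodesBelow p t).Finite :=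
  t.inits.finite_toSet.subset fun _ hs ↦ (List.mem_inits _ _).2 hs.2.1

theorem branchNodesBelow_subset (htu : t <+: u) :
    branchNodesBelow p t ⊆ branchNodesBelow p u := by
  rintro s ⟨hs, hst, hne⟩
  refine ⟨hs, hst.trans htu, ?_⟩
  rintro rfl
  exact hne (hst.eq_of_length_le htu.length_le)

theorem nthBranchNode_zero_iff :
    NthBranchNode p 0 t ↔ BranchNode p t ∧ branchNodesBelow p t = ∅ :=
  and_congr_right fun _ ↦ Set.ncard_eq_zero (finite_branchNodesBelow p t)

theorem BranchNode.exists_nthBranchNode_zero (hu : BranchNode p u) :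
    ∃ t, NthBranchNode p 0 t := by
  obtain ⟨t, ht, hmin⟩ := (measure List.length).wf.has_min {t | BranchNode p t} ⟨u, hu⟩
  refine ⟨t, nthBranchNode_zero_iff.2 ⟨ht, Set.eq_empty_of_forall_notMem ?_⟩⟩
  rintro s ⟨hs, hst, hne⟩
  exact hne (hst.eq_of_length_le (not_lt.1 (hmin s hs)))

theorem exists_mem_branchNodesBelow_meet (hp : ∀ s ∈ p, ∀ t, t <+: s → t ∈ p)
    (hx : x ∈ p) (hy : y ∈ p) (hxy : ¬ x <+: y) (hyx : ¬ y <+: x) :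
    ∃ c ∈ branchNodesBelow p x, ∀ r, r <+: x → r <+: y → r <+: c := by
  obtain ⟨c, a, b, hab, hcx, hcy⟩ := exists_concat_prefix_of_incomparable hxy hyx
  have hca : c ++ [a] ∈ p := hp x hx _ hcx
  have hcb : c ++ [b] ∈ p := hp y hy _ hcy
  have hc : BranchNode p c := by
    refine ⟨hp _ hca c (List.prefix_append c [a]), ?_⟩
    cases a <;> cases b <;> simp_all only [ne_eq, not_true_eq_false, and_self]
  refine ⟨c, ⟨hc, (List.prefix_append c [a]).trans hcx, ?_⟩,
    fun r ↦ prefix_of_concat_prefix_of_ne hab hcx hcy⟩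
  rintro rfl
  simpa using hcx.length_le

theorem ncard_branchNodesBelow_lt {r : List Bool}
    (hp : ∀ s ∈ p, ∀ t, t <+: s → t ∈ p) (hx : x ∈ p) (hy : y ∈ p)
    (hxy : ¬ x <+: y) (hyx : ¬ y <+: x) (hrx : r <+: x) (hry : r <+: y) :
    (branchNodesBelow p r).ncard < (branchNodesBelow p x).ncard := by
  obtain ⟨c, hcx, hmeet⟩ := exists_mem_branchNodesBelow_meet hp hx hy hxy hyx
  have hcr : c ∉ branchNodesBelow p r := fun hc ↦
    hc.2.2 (hc.2.1.eq_of_length_le (hmeet r hrx hry).length_le)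
  exact Set.ncard_lt_ncard
    ((Set.ssubset_iff_of_subset (branchNodesBelow_subset hrx)).2 ⟨c, hcx, hcr⟩)
    (finite_branchNodesBelow p x)

theorem length_le_ncard_branchNodesBelow {σ : List Bool → List Bool} {n : ℕ}
    (hp : ∀ s ∈ p, ∀ t, t <+: s → t ∈ p) (hmono : ∀ s u, s <+: u → σ s <+: σ u)
    (hsplit : ∀ s, ¬ σ (s ++ [false]) <+: σ (s ++ [true]) ∧
      ¬ σ (s ++ [true]) <+: σ (s ++ [false]))
    (hmem : ∀ s, s.length ≤ n → σ s ∈ p) (s : List Bool) (hs : s.length ≤ n) :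
    s.length ≤ (branchNodesBelow p (σ s)).ncard := by
  induction s using List.reverseRecOn with
  | nil => exact Nat.zero_le _
  | append_singleton s i ih =>
    rw [List.length_append, List.length_singleton] at hs ⊢
    have hmem' (b : Bool) : σ (s ++ [b]) ∈ p := hmem _ (by simpa using hs)
    have hpre (b : Bool) : σ s <+: σ (s ++ [b]) := hmono _ _ (List.prefix_append s [b])
    have hlt : (branchNodesBelow p (σ s)).ncard < (branchNodesBelow p (σ (s ++ [i]))).ncard := by
      obtain ⟨hft, htf⟩ := hsplit s
      cases i
      · exact ncard_branchNodesBelow_lt hp (hmem' _) (hmem' _) hft htf (hpre _) (hpre _)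
      · exact ncard_branchNodesBelow_lt hp (hmem' _) (hmem' _) htf hft (hpre _) (hpre _)
    exact (ih (by omega)).trans_lt hlt

theorem NthBranchNode.prefix_or_prefix_of_mem (ht : NthBranchNode p 0 t)
    (hp : ∀ s ∈ p, ∀ t, t <+: s → t ∈ p) (hx : x ∈ p) : t <+: x ∨ x <+: t := by
  by_contra! hinc
  obtain ⟨c, hc, -⟩ := exists_mem_branchNodesBelow_meet hp ht.1.1 hx hinc.1 hinc.2
  rw [(nthBranchNode_zero_iff.1 ht).2] at hc
  exact hc

theorem NthBranchNode.prefix_of_subset (ht : NthBranchNode p 0 t) (hu : NthBranchNode q 0 u)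
    (hp : ∀ s ∈ p, ∀ t, t <+: s → t ∈ p) (hqp : q ⊆ p) : t <+: u := by
  have hup : BranchNode p u := hu.1.mono hqp
  rcases ht.prefix_or_prefix_of_mem hp hup.1 with htu | hut
  · exact htu
  · by_contra htu
    have hmem : u ∈ branchNodesBelow p t := ⟨hup, hut, fun h ↦ htu (h ▸ List.prefix_rfl)⟩
    rw [(nthBranchNode_zero_iff.1 ht).2] at hmem
    exact hmem

end BranchNode

section PerfectTree

variable {p : Set (List Bool)}

theorem PerfectTree.exists_nthBranchNode_zero (hp : PerfectTree p) :
    ∃ t, NthBranchNode p 0 t := by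
  obtain ⟨⟨r, hr⟩, hclosed, hbranch⟩ := hp
  obtain ⟨x, hx, y, hy, -, -, hxy, hyx⟩ := hbranch r hr
  obtain ⟨c, hc, -⟩ := exists_mem_branchNodesBelow_meet hclosed hx hy hxy hyx
  exact hc.1.exists_nthBranchNode_zero

theorem PerfectTree.biUnion {ι : Type*} {I : Set ι} {f : ι → Set (List Bool)} (hI : I.Nonempty)
    (hf : ∀ i ∈ I, PerfectTree (f i)) : PerfectTree (⋃ i ∈ I, f i) := by
  refine ⟨Set.nonempty_biUnion.2 ?_, fun x hx t htx ↦ ?_, fun t ht ↦ ?_⟩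
  · obtain ⟨i, hi⟩ := hI
    exact ⟨i, hi, (hf i hi).1⟩
  · obtain ⟨i, hi, hxi⟩ := Set.mem_iUnion₂.1 hx
    exact Set.mem_biUnion hi ((hf i hi).2.1 x hxi t htx)
  · obtain ⟨i, hi, hti⟩ := Set.mem_iUnion₂.1 ht
    obtain ⟨x, hx, y, hy, hxy⟩ := (hf i hi).2.2 t hti
    exact ⟨x, Set.mem_biUnion hi hx, y, Set.mem_biUnion hi hy, hxy⟩

end PerfectTree

/-- The union `p_n` of the sets `R s` over all `s ∈ 2^n`. -/
def fusionLevel (R : List Bool → Set (List Bool)) (n : ℕ) : Set (List Bool) :=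
  ⋃ s ∈ {s : List Bool | s.length = n}, R s

section FusionLevel

variable {R : List Bool → Set (List Bool)} {n : ℕ} {x : List Bool}

theorem mem_fusionLevel : x ∈ fusionLevel R n ↔ ∃ s : List Bool, s.length = n ∧ x ∈ R s := by
  simp [fusionLevel]

theorem fusionLevel_zero (R : List Bool → Set (List Bool)) : fusionLevel R 0 = R [] := by
  ext x
  simp only [mem_fusionLevel, List.length_eq_zero_iff, exists_eq_left]

theorem perfectTree_fusionLevel (hR : ∀ s, PerfectTree (R s)) (n : ℕ) :
    PerfectTree (fusionLevel R n) :=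
  PerfectTree.biUnion ⟨List.replicate n false, List.length_replicate⟩ fun s _ ↦ hR s

theorem fusionLevel_succ_subset (hmono : ∀ s₁ s₂ : List Bool, s₁ <+: s₂ → R s₂ ⊆ R s₁) (n : ℕ) :
    fusionLevel R (n + 1) ⊆ fusionLevel R n := by
  intro x hx
  obtain ⟨s, hs, hxs⟩ := mem_fusionLevel.1 hx
  exact mem_fusionLevel.2 ⟨s.take n, by simp [hs], hmono _ _ (List.take_prefix n s) hxs⟩

theorem stem_mem_fusionLevel {s t : List Bool} (hR : ∀ s, PerfectTree (R s))
    (hmono : ∀ s₁ s₂ : List Bool, s₁ <+: s₂ → R s₂ ⊆ R s₁) (hs : s.length ≤ n)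
    (ht : NthBranchNode (R s) 0 t) : t ∈ fusionLevel R n := by
  obtain ⟨m, rfl⟩ := Nat.exists_eq_add_of_le hs
  let w := s ++ List.replicate m false
  obtain ⟨u, hu⟩ := (hR w).exists_nthBranchNode_zero
  have htu : t <+: u := ht.prefix_of_subset hu (hR s).2.1 (hmono s w (List.prefix_append s _))
  exact mem_fusionLevel.2 ⟨w, by simp [w], (hR w).2.1 u hu.1.1 t htu⟩

theorem length_le_ncard_branchNodesBelow_fusionLevel {s t : List Bool}
    (hR : ∀ s, PerfectTree (R s)) (hmono : ∀ s₁ s₂ : List Bool, s₁ <+: s₂ → R s₂ ⊆ R s₁)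
    (hstem : ∀ s t₀ t₁ : List Bool, NthBranchNode (R (s ++ [false])) 0 t₀ →
      NthBranchNode (R (s ++ [true])) 0 t₁ → ¬ t₀ <+: t₁ ∧ ¬ t₁ <+: t₀)
    (hs : s.length ≤ n) (ht : NthBranchNode (R s) 0 t) :
    s.length ≤ (branchNodesBelow (fusionLevel R n) t).ncard := by
  choose σ hσ using fun s ↦ (hR s).exists_nthBranchNode_zero
  have hcount : s.length ≤ (branchNodesBelow (fusionLevel R n) (σ s)).ncard :=
    length_le_ncard_branchNodesBelow (perfectTree_fusionLevel hR n).2.1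
      (fun s u hsu ↦ (hσ s).prefix_of_subset (hσ u) (hR s).2.1 (hmono s u hsu))
      (fun s ↦ hstem s _ _ (hσ _) (hσ _))
      (fun s hs ↦ stem_mem_fusionLevel hR hmono hs (hσ s)) s hs
  have hσt : σ s <+: t := (hσ s).prefix_of_subset ht (hR s).2.1 subset_rfl
  exact hcount.trans
    (Set.ncard_le_ncard (branchNodesBelow_subset hσt) (finite_branchNodesBelow _ t))

theorem concat_mem_fusionLevel_succ {t : List Bool} {b : Bool} (hR : ∀ s, PerfectTree (R s))
    (hmono : ∀ s₁ s₂ : List Bool, s₁ <+: s₂ → R s₂ ⊆ R s₁)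
    (hstem : ∀ s t₀ t₁ : List Bool, NthBranchNode (R (s ++ [false])) 0 t₀ →
      NthBranchNode (R (s ++ [true])) 0 t₁ → ¬ t₀ <+: t₁ ∧ ¬ t₁ <+: t₀)
    (ht : (branchNodesBelow (fusionLevel R n) t).ncard < n) (htb : t ++ [b] ∈ fusionLevel R n) :
    t ++ [b] ∈ fusionLevel R (n + 1) := by
  obtain ⟨s, rfl, htbs⟩ := mem_fusionLevel.1 htb
  obtain ⟨r, hr⟩ := (hR s).exists_nthBranchNode_zero
  have hrt : ¬ r <+: t := fun hrt ↦ by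
    have hle := Set.ncard_le_ncard (branchNodesBelow_subset hrt)
      (finite_branchNodesBelow (fusionLevel R s.length) t)
    have hcount := length_le_ncard_branchNodesBelow_fusionLevel hR hmono hstem le_rfl hr
    omega
  have htr : t ++ [b] <+: r := by
    rcases hr.prefix_or_prefix_of_mem (hR s).2.1 htbs with h | h
    · exact (List.prefix_concat_iff.1 h).elim (fun h ↦ h ▸ List.prefix_rfl) (absurd · hrt)
    · exact h
  exact (perfectTree_fusionLevel hR _).2.1 r
    (stem_mem_fusionLevel hR hmono (Nat.le_succ _) hr) _ htr

theorem BranchNode.fusionLevel_succ {t : List Bool} (hR : ∀ s, PerfectTree (R s))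
    (hmono : ∀ s₁ s₂ : List Bool, s₁ <+: s₂ → R s₂ ⊆ R s₁)
    (hstem : ∀ s t₀ t₁ : List Bool, NthBranchNode (R (s ++ [false])) 0 t₀ →
      NthBranchNode (R (s ++ [true])) 0 t₁ → ¬ t₀ <+: t₁ ∧ ¬ t₁ <+: t₀)
    (ht : BranchNode (fusionLevel R n) t)
    (hlt : (branchNodesBelow (fusionLevel R n) t).ncard < n) :
    BranchNode (fusionLevel R (n + 1)) t := by
  have hsucc (b : Bool) (hb : t ++ [b] ∈ fusionLevel R n) : t ++ [b] ∈ fusionLevel R (n + 1) :=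
    concat_mem_fusionLevel_succ hR hmono hstem hlt hb
  have hf := hsucc false ht.2.1
  exact ⟨(perfectTree_fusionLevel hR _).2.1 _ hf t (List.prefix_append t [false]), hf,
    hsucc true ht.2.2⟩

end FusionLevel

/-- Fusion Helper Lemma: if `R : 2^{<ω} → 𝕊` is monotone (extension of the index gives
a stronger condition) and the stems of `R(s⌢0)` and `R(s⌢1)` are incomparable, then
setting `P n = ⋃ {R(s) : s ∈ 2^n}`, each `P n` is a Sacks condition,
`P 0 = R ∅ ⊇ P 1`, and `P (n+1) ≤_{n-1} P n` for every `n ≥ 1`,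
i.e. `R(∅) = P 0 ≥ P 1 ≥₀ P 2 ≥₁ P 3 ≥₂ ⋯` is a fusion sequence. -/
theorem fusion_helper (R : List Bool → Set (List Bool))
    (hR : ∀ s, PerfectTree (R s))
    (hmono : ∀ s₁ s₂ : List Bool, s₁ <+: s₂ → R s₂ ⊆ R s₁)
    (hstem : ∀ s t₀ t₁ : List Bool, NthBranchNode (R (s ++ [false])) 0 t₀ →
      NthBranchNode (R (s ++ [true])) 0 t₁ → ¬ t₀ <+: t₁ ∧ ¬ t₁ <+: t₀)
    (P : ℕ → Set (List Bool))
    (hP : ∀ n, P n = ⋃ s ∈ {s : List Bool | s.length = n}, R s) :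
    (∀ n, PerfectTree (P n)) ∧ P 0 = R [] ∧ P 1 ⊆ P 0 ∧
      ∀ n, 1 ≤ n → LeqN (n - 1) (P (n + 1)) (P n) := by
  obtain rfl : P = fusionLevel R := funext hP
  refine ⟨perfectTree_fusionLevel hR, fusionLevel_zero R, fusionLevel_succ_subset hmono 0,
    fun n hn ↦ ⟨fusionLevel_succ_subset hmono n, fun k hk t ht ↦ ?_⟩⟩
  have hlt : (branchNodesBelow (fusionLevel R n) t).ncard < n :=
    ht.2.trans_lt (by omega)
  have hbranch : BranchNode (fusionLevel R (n + 1)) t := ht.1.fusionLevel_succ hR hmono hstem hlt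
  exact ⟨hbranch.1, hbranch⟩
end

section
/- Let X = ⟨x_n : n ∈ ω⟩ be a sequence of elements of ω^ω and let ⟨T_n : n ∈ ω⟩ be a sequence of trees T_n ⊆ ω^{<ω} satisfying: (1) x_n ∈ [T_n] for every n; and (2) for all n₁, n₂ ∈ ω, either x_{n₁} = x_{n₂} or [T_{n₁}] ∩ [T_{n₂}] = ∅. Define g : ω^ω → ω^ω by g(x)(n) := max{Exit(T_n)(x), n}. Then for every x ∈ ω^ω, f_X(x) ≤* g(x). -/
/-- The initial segment `x ↾ l` of `x ∈ ω^ω`, as an element of `ω^{<ω}`. -/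
def seg (x : ℕ → ℕ) (l : ℕ) : List ℕ := (List.range l).map x

/-- A tree: a set of finite sequences of naturals closed under initial segments. -/
def IsTree (T : Set (List ℕ)) : Prop := ∀ s ∈ T, ∀ t : List ℕ, t <+: s → t ∈ T

/-- `[T]`: the set of infinite paths through `T`, i.e. those `x ∈ ω^ω` all of whose
finite initial segments belong to `T`. -/
def Branches (T : Set (List ℕ)) : Set (ℕ → ℕ) := {x | ∀ l, seg x l ∈ T}

/-- A tree is leafless if every element has a proper extension in the tree. -/
def Leafless (T : Set (List ℕ)) : Prop := ∀ t ∈ T, ∃ n : ℕ, t ++ [n] ∈ T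

/-- `T` obeys `f` iff for each level `l`, the set of `n` such that `t⌢n ∈ T` for some
`t ∈ T` of length `l` has size at most `f l`. -/
def Obeys (T : Set (List ℕ)) (f : ℕ → ℕ) : Prop :=
  ∀ l : ℕ, ∃ S : Finset ℕ, S.card ≤ f l ∧
    ∀ n : ℕ, (∃ t ∈ T, t.length = l ∧ t ++ [n] ∈ T) → n ∈ S

/-- `Exit(T)(x)`: the least `l` with `x ↾ l ∉ T` if `x ∉ [T]`, and `0` if `x ∈ [T]`
(in which case the set below is empty and `sInf ∅ = 0`). -/
noncomputable def exitLevel (T : Set (List ℕ)) (x : ℕ → ℕ) : ℕ := sInf {l | seg x l ∉ T}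

/-- `f_X(x)(n)`: the least `l` with `x l ≠ x_n l` if `x ≠ x_n`, and `0` otherwise
(in which case the set below is empty and `sInf ∅ = 0`). -/
noncomputable def fSeq (X : ℕ → ℕ → ℕ) (x : ℕ → ℕ) (n : ℕ) : ℕ := sInf {l | x l ≠ X n l}

/-!
A point `x` outside `[T n]` leaves `T n` no earlier than it leaves `X n`, because `T n` contains
every initial segment of `X n`; this bounds `fSeq X x n` by the exit level. All the `n` with
`x ∈ [T n]` share one value of `X n`, since their branch sets meet at `x`, hence also one value
of `fSeq X x n`, which every large enough `n` dominates.
-/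

section

variable {X : ℕ → ℕ → ℕ} {T : Set (List ℕ)} {x y : ℕ → ℕ} {n i l : ℕ}

theorem seg_congr (h : ∀ i < l, x i = y i) : seg x l = seg y l :=
  List.map_congr_left fun i hi => h i (List.mem_range.mp hi)

theorem seg_exitLevel_notMem (hx : x ∉ Branches T) : seg x (exitLevel T x) ∉ T :=
  Nat.sInf_mem (not_forall.mp hx)

theorem eq_of_lt_fSeq (hi : i < fSeq X x n) : x i = X n i :=
  not_not.mp (Nat.notMem_of_lt_sInf hi)

theorem seg_eq_seg_of_le_fSeq (hl : l ≤ fSeq X x n) : seg x l = seg (X n) l :=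
  seg_congr fun _ hi => eq_of_lt_fSeq (hi.trans_le hl)

theorem fSeq_le_exitLevel (hX : X n ∈ Branches T) (hx : x ∉ Branches T) :
    fSeq X x n ≤ exitLevel T x := by
  by_contra! hlt
  have hseg : seg x (exitLevel T x) = seg (X n) (exitLevel T x) := seg_eq_seg_of_le_fSeq hlt.le
  exact seg_exitLevel_notMem hx (hseg ▸ hX (exitLevel T x))

end

theorem tree_avoid_general (X : ℕ → ℕ → ℕ) (T : ℕ → Set (List ℕ))
    (hmem : ∀ n, X n ∈ Branches (T n))
    (hsep : ∀ n₁ n₂ : ℕ, X n₁ = X n₂ ∨ Branches (T n₁) ∩ Branches (T n₂) = ∅) (x : ℕ → ℕ) :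
    ∃ c, ∀ n, fSeq X x n ≤ max (exitLevel (T n) x) c := by
  by_cases hx : ∃ m, x ∈ Branches (T m)
  · obtain ⟨m, hm⟩ := hx
    refine ⟨fSeq X x m, fun n => ?_⟩
    by_cases hn : x ∈ Branches (T n)
    · have hX : X n = X m := (hsep n m).resolve_right (Set.Nonempty.ne_empty ⟨x, hn, hm⟩)
      have hf : fSeq X x n = fSeq X x m := by simp only [fSeq, hX]
      exact hf.le.trans (le_max_right _ _)
    · exact le_max_of_le_left (fSeq_le_exitLevel (hmem n) hn)
  · exact ⟨0, fun n => le_max_of_le_left (fSeq_le_exitLevel (hmem n) (not_exists.mp hx n))⟩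

/-- Proposition (tree avoidance): if `x_n ∈ [T_n]` for every `n` and for all `n₁, n₂`
either `x_{n₁} = x_{n₂}` or `[T_{n₁}] ∩ [T_{n₂}] = ∅`, then the function
`g(x)(n) = max(Exit(T_n)(x), n)` pointwise eventually dominates `f_X`. -/
theorem tree_avoid (X : ℕ → ℕ → ℕ) (T : ℕ → Set (List ℕ))
    (htree : ∀ n, IsTree (T n))
    (hmem : ∀ n, X n ∈ Branches (T n))
    (hsep : ∀ n₁ n₂ : ℕ, X n₁ = X n₂ ∨ Branches (T n₁) ∩ Branches (T n₂) = ∅)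
    (g : (ℕ → ℕ) → ℕ → ℕ)
    (hg : ∀ x n, g x n = max (exitLevel (T n) x) n) :
    ∀ x : ℕ → ℕ, ∀ᶠ n in Filter.atTop, fSeq X x n ≤ g x n := by
  intro x
  obtain ⟨c, hc⟩ := tree_avoid_general X T hmem hsep x
  filter_upwards [Filter.eventually_ge_atTop c] with n hn
  exact (hc n).trans (hg x n ▸ max_le_max_left _ hn)
end

section
/- Let ⟨f_i : i ∈ ω⟩ be functions f_i : ω → ω∖{0}, let ⟨(i_j, l_j) : j ∈ ω⟩ be an enumeration of ω × ω without repetition, let ⟨x_i : i ∈ ω⟩ be elements of ω^ω, and suppose h : ω → [ω]^{<ω} satisfies, for every j ∈ ω, |h(j)| ≤ f_{i_j}(l_j), h(j) ≠ ∅, and x_{i_j}(l_j) ∈ h(j). Then there exists a sequence of trees ⟨T_i : i ∈ ω⟩, T_i ⊆ ω^{<ω}, such that for every i ∈ ω, T_i is a leafless tree that obeys f_i and x_i ∈ [T_i]. -/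
/-
`T_i` is cut out level by level: the entry at level `l` has to lie in `h j`, where
`e j = (i, l)`. It is thus built from `h` alone, so it has as a branch every element of `ω^ω`
captured by `h` along `e`, not just the given `x_i`.
-/

/-- The tree of finite sequences whose `l`-th entry lies in `S l`. When every `S l` is finite,
this is the tree of finite sequences captured by the slalom `S`. -/
def prodTree {α : Type*} (S : ℕ → Set α) : Set (List α) :=
  {s | ∀ l (hl : l < s.length), s[l] ∈ S l}

theorem append_singleton_mem_prodTree {α : Type*} {S : ℕ → Set α} {t : List α} {n : α} :
    t ++ [n] ∈ prodTree S ↔ t ∈ prodTree S ∧ n ∈ S t.length := by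
  simp only [prodTree, Set.mem_ofPred_eq, List.length_append, List.length_singleton]
  constructor
  · intro ht
    refine ⟨fun l hl => ?_, by simpa using ht t.length (Nat.lt_succ_self _)⟩
    simpa only [List.getElem_append_left hl] using ht l (Nat.lt_succ_of_lt hl)
  · rintro ⟨ht, hn⟩ l hl
    obtain hl | rfl := Nat.lt_succ_iff_lt_or_eq.mp hl
    · simpa only [List.getElem_append_left hl] using ht l hl
    · simpa using hn

theorem isTree_prodTree (S : ℕ → Set ℕ) : IsTree (prodTree S) := fun _ hs _ hts l hl => by
  rw [hts.getElem hl]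
  exact hs l (hl.trans_le hts.length_le)

theorem leafless_prodTree {S : ℕ → Set ℕ} (hS : ∀ l, (S l).Nonempty) :
    Leafless (prodTree S) := fun t ht =>
  (hS t.length).imp fun _ hn => append_singleton_mem_prodTree.mpr ⟨ht, hn⟩

theorem obeys_prodTree {S : ℕ → Finset ℕ} {f : ℕ → ℕ} (hS : ∀ l, (S l).card ≤ f l) :
    Obeys (prodTree fun l => (S l : Set ℕ)) f := by
  refine fun l => ⟨S l, hS l, ?_⟩
  rintro n ⟨t, -, rfl, htn⟩
  exact (append_singleton_mem_prodTree.mp htn).2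

theorem mem_branches_prodTree {S : ℕ → Set ℕ} {y : ℕ → ℕ} (hy : ∀ l, y l ∈ S l) :
    y ∈ Branches (prodTree S) := fun _ k _ => by
  simpa only [seg, List.getElem_map, List.getElem_range] using hy k

theorem slalom_to_trees_general {ι κ : Type*} (f : ι → ℕ → ℕ)
    (e : κ → ι × ℕ) (he : Function.Surjective e) (h : κ → Finset ℕ)
    (hcard : ∀ j, (h j).card ≤ f (e j).1 (e j).2) (hne : ∀ j, (h j).Nonempty) :
    ∃ T : ι → Set (List ℕ), ∀ i, IsTree (T i) ∧ Leafless (T i) ∧ Obeys (T i) (f i) ∧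
      ∀ y : ℕ → ℕ, (∀ j, (e j).1 = i → y (e j).2 ∈ h j) → y ∈ Branches (T i) := by
  obtain ⟨g, hg⟩ := he.hasRightInverse
  refine ⟨fun i => prodTree fun l => (h (g (i, l)) : Set ℕ), fun i =>
    ⟨isTree_prodTree _, leafless_prodTree fun l => hne _, obeys_prodTree fun l => ?_,
      fun y hy => mem_branches_prodTree fun l => ?_⟩⟩
  · simpa only [hg (i, l)] using hcard (g (i, l))
  · simpa only [hg (i, l), forall_const, Finset.mem_coe] using hy (g (i, l))

/-- From a slalom `h` capturing `x_{i_j}(l_j)` along an enumeration `⟨(i_j, l_j) : j ∈ ω⟩`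
of `ω × ω` without repetition, with `|h j| ≤ f_{i_j}(l_j)` and `h j ≠ ∅`, one obtains a
sequence of leafless trees `T_i` obeying `f_i` with `x_i ∈ [T_i]` for every `i`. -/
theorem slalom_to_trees (f : ℕ → ℕ → ℕ) (hfpos : ∀ i l, 0 < f i l)
    (e : ℕ → ℕ × ℕ) (he : Function.Bijective e)
    (x : ℕ → ℕ → ℕ) (h : ℕ → Finset ℕ)
    (hcard : ∀ j, (h j).card ≤ f (e j).1 (e j).2)
    (hne : ∀ j, (h j).Nonempty)
    (hmem : ∀ j, x (e j).1 (e j).2 ∈ h j) :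
    ∃ T : ℕ → Set (List ℕ), ∀ i, IsTree (T i) ∧ Leafless (T i) ∧
      Obeys (T i) (f i) ∧ x i ∈ Branches (T i) := by
  obtain ⟨T, hT⟩ := slalom_to_trees_general f e he.surjective h hcard hne
  exact ⟨T, fun i => (hT i).imp_right <| .imp_right <| .imp_right fun hx =>
    hx (x i) fun j hj => hj ▸ hmem j⟩
end
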